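/- arXiv:2412.03429 — 14 statements merged into one kernel-verified Lean document; each statement's English description precedes it below -/
import Mathlib

section
/- (Theorem 1, optimality of the coherent forecast combination.) For every base-forecast vector ŷ : Fin m → ℝ, the vector ỹ := (M * Ωᵀ).mulVec ŷ is coherent, i.e. C.mulVec ỹ = 0, and it minimizes the generalized least-squares criterion among all coherent vectors: for every y : Fin n → ℝ with C.mulVec y = 0, one has (ŷ - K.mulVec ỹ) ⬝ᵥ W⁻¹.mulVec (ŷ - K.mulVec ỹ) ≤ (ŷ - K.mulVec y) ⬝ᵥ W⁻¹.mulVec (ŷ - K.mulVec y). -/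
open Matrix

/-- Theorem 1: the coherent forecast combination ỹ = M Ωᵀ ŷ is coherent and
minimizes the GLS criterion among all coherent vectors. -/
theorem occ_optimal {m n u : ℕ}
    (W : Matrix (Fin m) (Fin m) ℝ) (hW : W.PosDef)
    (K : Matrix (Fin m) (Fin n) ℝ) (hK : (Kᵀ * W⁻¹ * K).PosDef)
    (C : Matrix (Fin u) (Fin n) ℝ)
    (hC : (C * (Kᵀ * W⁻¹ * K)⁻¹ * Cᵀ).PosDef)
    (yhat : Fin m → ℝ) :
    let W_c : Matrix (Fin n) (Fin n) ℝ := (Kᵀ * W⁻¹ * K)⁻¹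
    let Ω : Matrix (Fin m) (Fin n) ℝ := W⁻¹ * K * W_c
    let M : Matrix (Fin n) (Fin n) ℝ := 1 - W_c * Cᵀ * (C * W_c * Cᵀ)⁻¹ * C
    let ytilde : Fin n → ℝ := (M * Ωᵀ).mulVec yhat
    C.mulVec ytilde = 0 ∧
      ∀ y : Fin n → ℝ, C.mulVec y = 0 →
        (yhat - K.mulVec ytilde) ⬝ᵥ W⁻¹.mulVec (yhat - K.mulVec ytilde) ≤
          (yhat - K.mulVec y) ⬝ᵥ W⁻¹.mulVec (yhat - K.mulVec y) := by
  intro V Ω M ytilde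
  have hA : (W⁻¹).PosDef := hW.inv
  have hAt : (W⁻¹)ᵀ = W⁻¹ := by
    have := hA.isHermitian.eq
    rwa [conjTranspose_eq_transpose_of_trivial] at this
  have hVt : Vᵀ = V := by
    have := hK.inv.isHermitian.eq
    rwa [conjTranspose_eq_transpose_of_trivial] at this
  have hSV : (Kᵀ * W⁻¹ * K) * V = 1 :=
    Matrix.mul_nonsing_inv _ ((Matrix.isUnit_iff_isUnit_det _).1 hK.isUnit)
  have hG : (C * V * Cᵀ) * (C * V * Cᵀ)⁻¹ = 1 :=
    Matrix.mul_nonsing_inv _ ((Matrix.isUnit_iff_isUnit_det _).1 hC.isUnit)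
  have hΩ : Ωᵀ = V * (Kᵀ * W⁻¹) := by
    simp only [Ω, transpose_mul, hVt, hAt]
  have hCM : C * M = 0 := by
    have : C * M = C - (C * V * Cᵀ) * (C * V * Cᵀ)⁻¹ * C := by
      simp only [M, Matrix.mul_sub, Matrix.mul_one, Matrix.mul_assoc]
    rw [this, hG, Matrix.one_mul, sub_self]
  have hcoh : C *ᵥ ytilde = 0 := by
    simp only [ytilde, mulVec_mulVec, ← Matrix.mul_assoc, hCM, Matrix.zero_mul, zero_mulVec]
  refine ⟨hcoh, fun y hy => ?_⟩
  have hSM : (Kᵀ * W⁻¹ * K) * (M * Ωᵀ)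
      = Kᵀ * W⁻¹ - Cᵀ * ((C * V * Cᵀ)⁻¹ * C * Ωᵀ) := by
    have h1 : (Kᵀ * W⁻¹ * K) * M
        = (Kᵀ * W⁻¹ * K) - ((Kᵀ * W⁻¹ * K) * V) * (Cᵀ * ((C * V * Cᵀ)⁻¹ * C)) := by
      simp only [M, Matrix.mul_sub, Matrix.mul_one, Matrix.mul_assoc]
    rw [← Matrix.mul_assoc, h1, hSV, Matrix.one_mul, Matrix.sub_mul]
    congr 1
    · rw [hΩ, ← Matrix.mul_assoc, hSV, Matrix.one_mul]
    · simp only [Matrix.mul_assoc]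
  set r := yhat - K *ᵥ ytilde with hr
  have hnorm : (Kᵀ * W⁻¹) *ᵥ r = Cᵀ *ᵥ (((C * V * Cᵀ)⁻¹ * C * Ωᵀ) *ᵥ yhat) := by
    rw [hr, mulVec_sub, mulVec_mulVec]
    simp only [ytilde]
    rw [mulVec_mulVec, hSM, sub_mulVec, mulVec_mulVec]
    abel
  have hd : yhat - K *ᵥ y = r + K *ᵥ (ytilde - y) := by
    rw [hr, mulVec_sub]; abel
  have hCd : C *ᵥ (ytilde - y) = 0 := by rw [mulVec_sub, hcoh, hy, sub_zero]
  generalize ytilde - y = d at hd hCd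
  have hcross : (K *ᵥ d) ⬝ᵥ (W⁻¹ *ᵥ r) = 0 := by
    rw [← vecMul_transpose, ← dotProduct_mulVec, mulVec_mulVec, hnorm, dotProduct_mulVec,
      vecMul_transpose, hCd, zero_dotProduct]
  have hcross2 : r ⬝ᵥ (W⁻¹ *ᵥ (K *ᵥ d)) = 0 := by
    rw [dotProduct_mulVec, ← mulVec_transpose, hAt, dotProduct_comm, hcross]
  have hnn : 0 ≤ (K *ᵥ d) ⬝ᵥ (W⁻¹ *ᵥ (K *ᵥ d)) := by
    simpa using hA.posSemidef.dotProduct_mulVec_nonneg (K *ᵥ d)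
  rw [hd, mulVec_add, dotProduct_add, add_dotProduct, add_dotProduct, hcross, hcross2]
  linarith
end

section
/- (Uniqueness of the coherent combined forecast.) For every base-forecast vector ŷ : Fin m → ℝ, the vector ỹ := (M * Ωᵀ).mulVec ŷ is the strict minimizer of the constrained least-squares problem: for every y : Fin n → ℝ with C.mulVec y = 0 and y ≠ ỹ, one has (ŷ - K.mulVec ỹ) ⬝ᵥ W⁻¹.mulVec (ŷ - K.mulVec ỹ) < (ŷ - K.mulVec y) ⬝ᵥ W⁻¹.mulVec (ŷ - K.mulVec y). -/
open Matrix

/-- Uniqueness: ỹ = M Ωᵀ ŷ is the strict minimizer of the constrained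
least-squares problem. -/
theorem occ_unique {m n u : ℕ}
    (W : Matrix (Fin m) (Fin m) ℝ) (hW : W.PosDef)
    (K : Matrix (Fin m) (Fin n) ℝ) (hK : (Kᵀ * W⁻¹ * K).PosDef)
    (C : Matrix (Fin u) (Fin n) ℝ)
    (hC : (C * (Kᵀ * W⁻¹ * K)⁻¹ * Cᵀ).PosDef)
    (yhat : Fin m → ℝ) :
    let W_c : Matrix (Fin n) (Fin n) ℝ := (Kᵀ * W⁻¹ * K)⁻¹
    let Ω : Matrix (Fin m) (Fin n) ℝ := W⁻¹ * K * W_c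
    let M : Matrix (Fin n) (Fin n) ℝ := 1 - W_c * Cᵀ * (C * W_c * Cᵀ)⁻¹ * C
    let ytilde : Fin n → ℝ := (M * Ωᵀ).mulVec yhat
    ∀ y : Fin n → ℝ, C.mulVec y = 0 → y ≠ ytilde →
      (yhat - K.mulVec ytilde) ⬝ᵥ W⁻¹.mulVec (yhat - K.mulVec ytilde) <
        (yhat - K.mulVec y) ⬝ᵥ W⁻¹.mulVec (yhat - K.mulVec y) := by
  intro W_c Ω M ytilde y hy hne
  have hWt : (W⁻¹)ᵀ = W⁻¹ := by
    have h := hW.inv.isHermitian.eq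
    rwa [conjTranspose_eq_transpose_of_trivial] at h
  have hct : W_cᵀ = W_c := by
    have h := hK.inv.isHermitian.eq
    rwa [conjTranspose_eq_transpose_of_trivial] at h
  have hA : (Kᵀ * W⁻¹ * K) * W_c = 1 :=
    Matrix.mul_nonsing_inv _ ((Matrix.isUnit_iff_isUnit_det _).1 hK.isUnit)
  have hS : (C * W_c * Cᵀ) * (C * W_c * Cᵀ)⁻¹ = 1 :=
    Matrix.mul_nonsing_inv _ ((Matrix.isUnit_iff_isUnit_det _).1 hC.isUnit)
  have hΩ : Ωᵀ = W_c * (Kᵀ * W⁻¹) := by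
    simp only [Ω, transpose_mul, hWt, hct]
  have hCM : C * M = 0 := by
    have : C * M = C - (C * W_c * Cᵀ) * (C * W_c * Cᵀ)⁻¹ * C := by
      simp only [M, Matrix.mul_sub, Matrix.mul_one, Matrix.mul_assoc]
    rw [this, hS, Matrix.one_mul, sub_self]
  have hCy : C *ᵥ ytilde = 0 := by
    simp only [ytilde, mulVec_mulVec, ← Matrix.mul_assoc, hCM, Matrix.zero_mul, zero_mulVec]
  have hAM : (Kᵀ * W⁻¹ * K) * (M * Ωᵀ) =
      Kᵀ * W⁻¹ - Cᵀ * ((C * W_c * Cᵀ)⁻¹ * C * Ωᵀ) := by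
    have h1 : (Kᵀ * W⁻¹ * K) * (M * Ωᵀ) = (Kᵀ * W⁻¹ * K) * Ωᵀ -
        ((Kᵀ * W⁻¹ * K) * W_c) * (Cᵀ * ((C * W_c * Cᵀ)⁻¹ * C * Ωᵀ)) := by
      simp only [M, Matrix.mul_sub, Matrix.sub_mul, Matrix.one_mul, Matrix.mul_assoc]
    have h2 : (Kᵀ * W⁻¹ * K) * Ωᵀ = Kᵀ * W⁻¹ := by
      rw [hΩ, ← Matrix.mul_assoc (Kᵀ * W⁻¹ * K), hA, Matrix.one_mul]
    rw [h1, h2, hA, Matrix.one_mul]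
  obtain ⟨d, hd⟩ : ∃ d, d = y - ytilde := ⟨_, rfl⟩
  have hd0 : d ≠ 0 := by rw [hd]; exact sub_ne_zero.2 hne
  have hCd : C *ᵥ d = 0 := by rw [hd, mulVec_sub, hy, hCy, sub_zero]
  obtain ⟨r, hr⟩ : ∃ r, r = yhat - K *ᵥ ytilde := ⟨_, rfl⟩
  have hgrad : Kᵀ *ᵥ (W⁻¹ *ᵥ r) = Cᵀ *ᵥ (((C * W_c * Cᵀ)⁻¹ * C * Ωᵀ) *ᵥ yhat) := by
    have h3 : Kᵀ *ᵥ (W⁻¹ *ᵥ r) =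
        (Kᵀ * W⁻¹) *ᵥ yhat - ((Kᵀ * W⁻¹ * K) * (M * Ωᵀ)) *ᵥ yhat := by
      rw [hr]
      simp only [ytilde, mulVec_sub, mulVec_mulVec, Matrix.mul_assoc]
    rw [h3, hAM, sub_mulVec, sub_sub_cancel, mulVec_mulVec]
  have hcross : (K *ᵥ d) ⬝ᵥ (W⁻¹ *ᵥ r) = 0 := by
    rw [← vecMul_transpose, ← dotProduct_mulVec, hgrad, dotProduct_mulVec, vecMul_transpose,
      hCd, zero_dotProduct]
  have hcross' : r ⬝ᵥ (W⁻¹ *ᵥ (K *ᵥ d)) = 0 := by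
    rw [dotProduct_mulVec, ← mulVec_transpose, hWt, dotProduct_comm, hcross]
  have hpos : 0 < (K *ᵥ d) ⬝ᵥ (W⁻¹ *ᵥ (K *ᵥ d)) := by
    have h := hK.dotProduct_mulVec_pos hd0
    rw [star_trivial] at h
    rw [← vecMul_transpose, ← dotProduct_mulVec, vecMul_transpose, mulVec_mulVec, mulVec_mulVec]
    exact h
  have hyd : yhat - K *ᵥ y = r - K *ᵥ d := by
    rw [hr, hd, mulVec_sub]; abel
  rw [hyd, ← hr, mulVec_sub, sub_dotProduct, dotProduct_sub, dotProduct_sub, hcross, hcross']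
  linarith
end

section
/- (Algebraic unbiasedness of the coherent combination, Corollary 1 / Remark 2.) The coherent combination weight matrix Ψᵀ := M * Ωᵀ satisfies Ψᵀ * K = M, and consequently for every vector μ : Fin n → ℝ with C.mulVec μ = 0 one has (M * Ωᵀ * K).mulVec μ = μ; that is, the coherent combined forecast of any coherent mean vector equals that mean vector. -/
open Matrix

/-- Corollary 1 / Remark 2: Ψᵀ * K = M, and the coherent combined forecast of any
coherent mean vector equals that mean vector. -/
theorem occ_unbiased {m n u : ℕ}
    (W : Matrix (Fin m) (Fin m) ℝ) (hW : W.PosDef)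
    (K : Matrix (Fin m) (Fin n) ℝ) (hK : (Kᵀ * W⁻¹ * K).PosDef)
    (C : Matrix (Fin u) (Fin n) ℝ)
    (hC : (C * (Kᵀ * W⁻¹ * K)⁻¹ * Cᵀ).PosDef) :
    let W_c : Matrix (Fin n) (Fin n) ℝ := (Kᵀ * W⁻¹ * K)⁻¹
    let Ω : Matrix (Fin m) (Fin n) ℝ := W⁻¹ * K * W_c
    let M : Matrix (Fin n) (Fin n) ℝ := 1 - W_c * Cᵀ * (C * W_c * Cᵀ)⁻¹ * C
    (M * Ωᵀ) * K = M ∧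
      ∀ μ : Fin n → ℝ, C.mulVec μ = 0 → (M * Ωᵀ * K).mulVec μ = μ := by
  intro W_c Ω M
  have hWt : Wᵀ = W := by
    have h := hW.isHermitian.eq
    rwa [conjTranspose_eq_transpose_of_trivial] at h
  have hdet : IsUnit (Kᵀ * W⁻¹ * K).det := isUnit_iff_ne_zero.mpr hK.det_pos.ne'
  have hΩ : Ωᵀ * K = 1 := by
    have hS : (Kᵀ * W⁻¹ * K)ᵀ = Kᵀ * W⁻¹ * K := by
      have h := hK.isHermitian.eq
      rwa [conjTranspose_eq_transpose_of_trivial] at h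
    have h1 : Ωᵀ = (Kᵀ * W⁻¹ * K)⁻¹ * (Kᵀ * W⁻¹) := by
      change (W⁻¹ * K * (Kᵀ * W⁻¹ * K)⁻¹)ᵀ = _
      rw [transpose_mul, transpose_nonsing_inv, hS, transpose_mul,
        transpose_nonsing_inv, hWt]
    rw [h1, Matrix.mul_assoc]
    exact nonsing_inv_mul _ hdet
  have hM : (M * Ωᵀ) * K = M := by rw [Matrix.mul_assoc, hΩ, Matrix.mul_one]
  refine ⟨hM, fun μ hμ => ?_⟩
  rw [hM]
  change (1 - W_c * Cᵀ * (C * W_c * Cᵀ)⁻¹ * C).mulVec μ = μ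
  rw [sub_mulVec, ← mulVec_mulVec, hμ, mulVec_zero, one_mulVec, sub_zero]
end

section
/- (Error covariance of the coherent combined forecast, Corollary 1, eq. (11).) One has M * W_c * Mᵀ = M * W_c, and consequently the coherent combination weight matrix Ψᵀ := M * Ωᵀ satisfies (M * Ωᵀ) * W * (M * Ωᵀ)ᵀ = M * W_c. In particular the matrix W̃_c := M * W_c is symmetric. -/
open Matrix

/-- Corollary 1, eq. (11): error covariance of the coherent combined forecast,
M * W_c * Mᵀ = M * W_c; hence (M Ωᵀ) W (M Ωᵀ)ᵀ = M W_c and M W_c is symmetric. -/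
theorem occ_coherent_covariance {m n u : ℕ}
    (W : Matrix (Fin m) (Fin m) ℝ) (hW : W.PosDef)
    (K : Matrix (Fin m) (Fin n) ℝ) (hK : (Kᵀ * W⁻¹ * K).PosDef)
    (C : Matrix (Fin u) (Fin n) ℝ)
    (hC : (C * (Kᵀ * W⁻¹ * K)⁻¹ * Cᵀ).PosDef) :
    let W_c : Matrix (Fin n) (Fin n) ℝ := (Kᵀ * W⁻¹ * K)⁻¹
    let Ω : Matrix (Fin m) (Fin n) ℝ := W⁻¹ * K * W_c
    let M : Matrix (Fin n) (Fin n) ℝ := 1 - W_c * Cᵀ * (C * W_c * Cᵀ)⁻¹ * C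
    M * W_c * Mᵀ = M * W_c ∧
      (M * Ωᵀ) * W * (M * Ωᵀ)ᵀ = M * W_c ∧
      (M * W_c).IsSymm := by
  intro V Ω M
  have hWu : IsUnit W.det := (Matrix.isUnit_iff_isUnit_det _).1 hW.isUnit
  have hKu : IsUnit (Kᵀ * W⁻¹ * K).det := (Matrix.isUnit_iff_isUnit_det _).1 hK.isUnit
  have hCu : IsUnit (C * V * Cᵀ).det := (Matrix.isUnit_iff_isUnit_det _).1 hC.isUnit
  have hWt : Wᵀ = W := by
    have h := hW.isHermitian.eq
    rwa [conjTranspose_eq_transpose_of_trivial] at h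
  have hVt : Vᵀ = V := by
    have h := hK.isHermitian.eq
    rw [conjTranspose_eq_transpose_of_trivial] at h
    change ((Kᵀ * W⁻¹ * K)⁻¹)ᵀ = (Kᵀ * W⁻¹ * K)⁻¹
    rw [transpose_nonsing_inv, h]
  have hTt : ((C * V * Cᵀ)⁻¹)ᵀ = (C * V * Cᵀ)⁻¹ := by
    have h := hC.isHermitian.eq
    rw [conjTranspose_eq_transpose_of_trivial] at h
    change (C * V * Cᵀ)ᵀ = C * V * Cᵀ at h
    rw [transpose_nonsing_inv, h]
  have hTS : (C * V * Cᵀ)⁻¹ * (C * V * Cᵀ) = 1 := nonsing_inv_mul _ hCu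
  have hVK : V * (Kᵀ * W⁻¹ * K) = 1 := nonsing_inv_mul _ hKu
  have hMt : Mᵀ = 1 - Cᵀ * ((C * V * Cᵀ)⁻¹ * (C * V)) := by
    simp only [M, transpose_sub, transpose_mul, transpose_one, transpose_transpose, hTt, hVt]
  have hMC : M * V * Cᵀ = 0 := by
    have h : M * V * Cᵀ
        = V * Cᵀ - V * Cᵀ * ((C * V * Cᵀ)⁻¹ * (C * V * Cᵀ)) := by
      simp only [M, Matrix.sub_mul, Matrix.one_mul, Matrix.mul_assoc]
    rw [h, hTS, Matrix.mul_one, sub_self]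
  have h1 : M * V * Mᵀ = M * V := by
    rw [hMt, Matrix.mul_sub, ← Matrix.mul_assoc (M * V), hMC, Matrix.zero_mul, Matrix.mul_one,
      sub_zero]
  have hΩ : Ωᵀ * W * Ω = V := by
    have ht : Ωᵀ = V * (Kᵀ * W⁻¹) := by
      simp only [Ω, transpose_mul, hVt, transpose_nonsing_inv, hWt]
    have h : Ωᵀ * W * Ω = V * (Kᵀ * (W⁻¹ * W) * W⁻¹ * K) * V := by
      rw [ht]
      simp only [Ω, Matrix.mul_assoc]
    rw [h, nonsing_inv_mul _ hWu, Matrix.mul_one, hVK, Matrix.one_mul]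
  refine ⟨h1, ?_, ?_⟩
  · have h : (M * Ωᵀ) * W * (M * Ωᵀ)ᵀ = M * (Ωᵀ * W * Ω) * Mᵀ := by
      simp only [transpose_mul M, transpose_transpose, Matrix.mul_assoc]
    rw [h, hΩ, h1]
  · change (M * V)ᵀ = M * V
    rw [← h1]
    simp only [transpose_mul, transpose_transpose, hVt, Matrix.mul_assoc]
end

section
/- (Reconciliation never worsens the combined forecast, eq. (21).) The difference W_c - M * W_c equals W_c * Cᵀ * (C * W_c * Cᵀ)⁻¹ * C * W_c, and this matrix is positive semidefinite; hence W̃_c := M * W_c satisfies W̃_c ⪯ W_c in the Loewner order. -/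
open Matrix

/-- Eq. (21): reconciliation never worsens the combined forecast:
W_c - M * W_c = W_c Cᵀ (C W_c Cᵀ)⁻¹ C W_c is positive semidefinite, so M W_c ⪯ W_c. -/
theorem occ_reconciliation_improves {m n u : ℕ}
    (W : Matrix (Fin m) (Fin m) ℝ) (hW : W.PosDef)
    (K : Matrix (Fin m) (Fin n) ℝ) (hK : (Kᵀ * W⁻¹ * K).PosDef)
    (C : Matrix (Fin u) (Fin n) ℝ)
    (hC : (C * (Kᵀ * W⁻¹ * K)⁻¹ * Cᵀ).PosDef) :
    let W_c : Matrix (Fin n) (Fin n) ℝ := (Kᵀ * W⁻¹ * K)⁻¹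
    let M : Matrix (Fin n) (Fin n) ℝ := 1 - W_c * Cᵀ * (C * W_c * Cᵀ)⁻¹ * C
    W_c - M * W_c = W_c * Cᵀ * (C * W_c * Cᵀ)⁻¹ * C * W_c ∧
      (W_c - M * W_c).PosSemidef := by
  intro W_c M
  have key : W_c - M * W_c = W_c * Cᵀ * (C * W_c * Cᵀ)⁻¹ * C * W_c := by
    simp only [M, Matrix.sub_mul, Matrix.one_mul, sub_sub_cancel]
  refine ⟨key, ?_⟩
  rw [key]
  have hWc : W_cᴴ = W_c := hK.inv.isHermitian.eq
  have h := (Matrix.PosDef.inv hC).posSemidef.mul_mul_conjTranspose_same (W_c * Cᵀ)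
  rw [Matrix.conjTranspose_mul, hWc, ← Matrix.conjTranspose_eq_transpose_of_trivial C,
    Matrix.conjTranspose_conjTranspose, Matrix.conjTranspose_eq_transpose_of_trivial,
    ← Matrix.mul_assoc] at h
  exact h
end

section
/- (Matrix Schwarz inequality for the combined covariance, eq. (18)/(20).) Let q : ℕ, E : Matrix (Fin m) (Fin q) ℝ and L : Matrix (Fin q) (Fin n) ℝ satisfy Kᵀ * E = Lᵀ. Then Eᵀ * W * E - L * W_c * Lᵀ is positive semidefinite, i.e. L * W_c * Lᵀ ⪯ Eᵀ * W * E. (Taking E to be the columns of K corresponding to the j-th expert, so that Eᵀ * W * E = W_j and L = L_j is the expert's selection matrix, this yields L_j * W_c * L_jᵀ ⪯ W_j.) -/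
open Matrix

/-- Eq. (18)/(20): matrix Schwarz inequality for the combined covariance:
if Kᵀ E = Lᵀ then L W_c Lᵀ ⪯ Eᵀ W E. -/
theorem occ_schwarz {m n q : ℕ}
    (W : Matrix (Fin m) (Fin m) ℝ) (hW : W.PosDef)
    (K : Matrix (Fin m) (Fin n) ℝ) (hK : (Kᵀ * W⁻¹ * K).PosDef)
    (E : Matrix (Fin m) (Fin q) ℝ) (L : Matrix (Fin q) (Fin n) ℝ)
    (hEL : Kᵀ * E = Lᵀ) :
    let W_c : Matrix (Fin n) (Fin n) ℝ := (Kᵀ * W⁻¹ * K)⁻¹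
    (Eᵀ * W * E - L * W_c * Lᵀ).PosSemidef := by
  intro C
  have hWd : IsUnit W.det := (Matrix.isUnit_iff_isUnit_det _).1 hW.isUnit
  have hSd : IsUnit (Kᵀ * W⁻¹ * K).det := (Matrix.isUnit_iff_isUnit_det _).1 hK.isUnit
  have hCT : Cᵀ = C := by
    have h := hK.inv.1
    rwa [Matrix.IsHermitian, conjTranspose_eq_transpose_of_trivial] at h
  have hVT : (W⁻¹)ᵀ = W⁻¹ := by
    have h := hW.inv.1
    rwa [Matrix.IsHermitian, conjTranspose_eq_transpose_of_trivial] at h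
  have hCS : C * (Kᵀ * W⁻¹ * K) = 1 := Matrix.nonsing_inv_mul _ hSd
  have hEK : Eᵀ * K = L := by
    have h := congrArg Matrix.transpose hEL
    simpa [Matrix.transpose_mul] using h
  have hp := hW.posSemidef.conjTranspose_mul_mul_same (E - W⁻¹ * K * C * Lᵀ)
  rw [conjTranspose_eq_transpose_of_trivial] at hp
  have hWD : W * (E - W⁻¹ * K * C * Lᵀ) = W * E - K * C * Lᵀ := by
    rw [Matrix.mul_sub]
    simp only [Matrix.mul_assoc]
    rw [Matrix.mul_nonsing_inv_cancel_left _ _ hWd]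
  have hDT : (E - W⁻¹ * K * C * Lᵀ)ᵀ = Eᵀ - L * C * Kᵀ * W⁻¹ := by
    simp only [transpose_sub, transpose_mul, hCT, hVT, transpose_transpose, Matrix.mul_assoc]
  have h1 : L * C * Kᵀ * W⁻¹ * (W * E) = L * C * Lᵀ := by
    simp only [Matrix.mul_assoc]
    rw [Matrix.nonsing_inv_mul_cancel_left _ _ hWd, hEL]
  have h2 : L * C * Kᵀ * W⁻¹ * (K * C * Lᵀ) = L * C * Lᵀ := by
    calc _ = L * (C * (Kᵀ * W⁻¹ * K)) * C * Lᵀ := by simp only [Matrix.mul_assoc]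
      _ = _ := by rw [hCS, Matrix.mul_one]
  have h3 : Eᵀ * (K * C * Lᵀ) = L * C * Lᵀ := by
    rw [← hEK]; simp only [Matrix.mul_assoc]
  rw [Matrix.mul_assoc, hWD, hDT, Matrix.sub_mul, Matrix.mul_sub, Matrix.mul_sub, h1, h2, h3,
    sub_self, sub_zero, ← Matrix.mul_assoc] at hp
  exact hp
end

section
/- (Corollary 1, eq. (12): chain of covariance inequalities.) Let q : ℕ, E : Matrix (Fin m) (Fin q) ℝ and L : Matrix (Fin q) (Fin n) ℝ satisfy Kᵀ * E = Lᵀ. Then, with W̃_c := M * W_c, both L * W_c * Lᵀ - L * W̃_c * Lᵀ and Eᵀ * W * E - L * W̃_c * Lᵀ are positive semidefinite; that is, L * W̃_c * Lᵀ ⪯ L * W_c * Lᵀ ⪯ Eᵀ * W * E. -/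
open Matrix

/-- Corollary 1, eq. (12): chain of covariance inequalities
L W̃_c Lᵀ ⪯ L W_c Lᵀ ⪯ Eᵀ W E, where W̃_c = M W_c. -/
theorem occ_covariance_chain {m n u q : ℕ}
    (W : Matrix (Fin m) (Fin m) ℝ) (hW : W.PosDef)
    (K : Matrix (Fin m) (Fin n) ℝ) (hK : (Kᵀ * W⁻¹ * K).PosDef)
    (C : Matrix (Fin u) (Fin n) ℝ)
    (hC : (C * (Kᵀ * W⁻¹ * K)⁻¹ * Cᵀ).PosDef)
    (E : Matrix (Fin m) (Fin q) ℝ) (L : Matrix (Fin q) (Fin n) ℝ)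
    (hEL : Kᵀ * E = Lᵀ) :
    let W_c : Matrix (Fin n) (Fin n) ℝ := (Kᵀ * W⁻¹ * K)⁻¹
    let M : Matrix (Fin n) (Fin n) ℝ := 1 - W_c * Cᵀ * (C * W_c * Cᵀ)⁻¹ * C
    let Wtc : Matrix (Fin n) (Fin n) ℝ := M * W_c
    (L * W_c * Lᵀ - L * Wtc * Lᵀ).PosSemidef ∧
      (Eᵀ * W * E - L * Wtc * Lᵀ).PosSemidef := by
  intro W_c M Wtc
  have hWc : W_c.PosDef := hK.inv
  have hWcT : W_cᵀ = W_c := by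
    have h := hWc.isHermitian.eq
    rwa [conjTranspose_eq_transpose_of_trivial] at h
  have hWiT : (W⁻¹)ᵀ = W⁻¹ := by
    have h := hW.inv.isHermitian.eq
    rwa [conjTranspose_eq_transpose_of_trivial] at h
  have hS : (C * W_c * Cᵀ)⁻¹.PosDef := PosDef.inv hC
  have hWW : W * W⁻¹ = 1 := mul_nonsing_inv _ ((isUnit_iff_isUnit_det _).1 hW.isUnit)
  have hWW' : W⁻¹ * W = 1 := nonsing_inv_mul _ ((isUnit_iff_isUnit_det _).1 hW.isUnit)
  have hKK : Kᵀ * W⁻¹ * K * W_c = 1 :=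
    mul_nonsing_inv _ ((isUnit_iff_isUnit_det _).1 hK.isUnit)
  have hEK : Eᵀ * K = L := by
    have h := congrArg transpose hEL
    simpa [transpose_mul] using h
  have h1 : (L * W_c * Lᵀ - L * Wtc * Lᵀ).PosSemidef := by
    have h := hS.posSemidef.mul_mul_conjTranspose_same (L * W_c * Cᵀ)
    rw [conjTranspose_eq_transpose_of_trivial] at h
    convert h using 1
    simp only [Wtc, M, transpose_mul, transpose_transpose, hWcT, Matrix.sub_mul,
      Matrix.mul_sub, Matrix.one_mul, Matrix.mul_assoc, sub_sub_cancel]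
  have h2 : (Eᵀ * W * E - L * W_c * Lᵀ).PosSemidef := by
    have h := hW.posSemidef.conjTranspose_mul_mul_same (E - W⁻¹ * (K * (W_c * Lᵀ)))
    rw [conjTranspose_eq_transpose_of_trivial] at h
    convert h using 1
    have e1 : W * (E - W⁻¹ * (K * (W_c * Lᵀ))) = W * E - K * (W_c * Lᵀ) := by
      rw [Matrix.mul_sub, ← Matrix.mul_assoc W, hWW, Matrix.one_mul]
    have e2 : (E - W⁻¹ * (K * (W_c * Lᵀ)))ᵀ = Eᵀ - L * W_c * Kᵀ * W⁻¹ := by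
      simp only [transpose_sub, transpose_mul, transpose_transpose, hWcT, hWiT]
    have e3 : Eᵀ * (K * (W_c * Lᵀ)) = L * W_c * Lᵀ := by
      rw [← Matrix.mul_assoc, hEK, Matrix.mul_assoc]
    have e4 : L * W_c * Kᵀ * W⁻¹ * (W * E) = L * W_c * Lᵀ := by
      rw [Matrix.mul_assoc _ W⁻¹, ← Matrix.mul_assoc W⁻¹, hWW', Matrix.one_mul,
        Matrix.mul_assoc _ Kᵀ, hEL]
    have e5 : L * W_c * Kᵀ * W⁻¹ * (K * (W_c * Lᵀ)) = L * W_c * Lᵀ := by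
      have : L * W_c * Kᵀ * W⁻¹ * (K * (W_c * Lᵀ))
          = L * W_c * ((Kᵀ * W⁻¹ * K * W_c) * Lᵀ) := by
        simp only [Matrix.mul_assoc]
      rw [this, hKK, Matrix.one_mul]
    rw [Matrix.mul_assoc _ W, Matrix.mul_assoc _ W, e1, e2, Matrix.mul_sub, Matrix.sub_mul, Matrix.sub_mul,
      e3, e4, e5, sub_self, sub_zero]
  refine ⟨h1, ?_⟩
  have h := h2.add h1
  rwa [sub_add_sub_cancel] at h
end

section
/- (Theorem D.2, optimal coherent combination via the structural approach.) The structural weight matrix G minimizes the trace of the coherent error covariance among all unbiased structural weight matrices: for every G' : Matrix (Fin b) (Fin m) ℝ with G' * K * S = 1, one has trace(S * G * W * Gᵀ * Sᵀ) ≤ trace(S * G' * W * G'ᵀ * Sᵀ). -/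
open Matrix

/-- Theorem D.2: the structural weight matrix G minimizes the trace of the coherent
error covariance among all unbiased structural weight matrices. -/
theorem structural_minimum_trace {m n b : ℕ}
    (W : Matrix (Fin m) (Fin m) ℝ) (hW : W.PosDef)
    (K : Matrix (Fin m) (Fin n) ℝ) (hK : (Kᵀ * W⁻¹ * K).PosDef)
    (S : Matrix (Fin n) (Fin b) ℝ)
    (hS : (Sᵀ * (Kᵀ * W⁻¹ * K) * S).PosDef) :
    let G : Matrix (Fin b) (Fin m) ℝ :=
      (Sᵀ * (Kᵀ * W⁻¹ * K) * S)⁻¹ * Sᵀ * Kᵀ * W⁻¹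
    ∀ G' : Matrix (Fin b) (Fin m) ℝ, G' * K * S = 1 →
      (S * G * W * Gᵀ * Sᵀ).trace ≤ (S * G' * W * G'ᵀ * Sᵀ).trace := by
  intro G G' h
  have hWu : IsUnit W.det := (Matrix.isUnit_iff_isUnit_det _).1 hW.isUnit
  have hAu := (Matrix.isUnit_iff_isUnit_det _).1 hS.isUnit
  have hWt : Wᵀ = W := by
    have := hW.isHermitian.eq
    rwa [Matrix.conjTranspose_eq_transpose_of_trivial] at this
  have hGKS : G * K * S = 1 := by
    have := Matrix.nonsing_inv_mul _ hAu
    rw [← this]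
    simp only [G, Matrix.mul_assoc]
  have hGW : G * W = (Sᵀ * (Kᵀ * W⁻¹ * K) * S)⁻¹ * Sᵀ * Kᵀ := by
    simp only [G]
    rw [Matrix.mul_assoc _ W⁻¹ W, Matrix.nonsing_inv_mul _ hWu, Matrix.mul_one]
  obtain ⟨D, hD⟩ : ∃ D, D = G' - G := ⟨_, rfl⟩
  have hDKS : D * K * S = 0 := by
    rw [hD, Matrix.sub_mul, Matrix.sub_mul, h, hGKS, sub_self]
  have h1 : G * W * Dᵀ = 0 := by
    have : Sᵀ * (Kᵀ * Dᵀ) = 0 := by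
      rw [← Matrix.transpose_mul, ← Matrix.transpose_mul, hDKS, Matrix.transpose_zero]
    rw [hGW, Matrix.mul_assoc, Matrix.mul_assoc, this, Matrix.mul_zero]
  have h2 : D * W * Gᵀ = 0 := by
    have := congrArg Matrix.transpose h1
    simpa [Matrix.transpose_mul, hWt, Matrix.mul_assoc] using this
  have hG' : G' = G + D := by rw [hD]; abel
  have key : G' * W * G'ᵀ = G * W * Gᵀ + D * W * Dᵀ := by
    rw [hG', Matrix.transpose_add, Matrix.add_mul, Matrix.add_mul, Matrix.mul_add,
      Matrix.mul_add, h1, h2]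
    abel
  have hpos : 0 ≤ (S * D * W * Dᵀ * Sᵀ).trace := by
    have := (hW.posSemidef.mul_mul_conjTranspose_same (S * D)).trace_nonneg
    rw [Matrix.conjTranspose_eq_transpose_of_trivial, Matrix.transpose_mul] at this
    simpa only [Matrix.mul_assoc] using this
  have e : S * G' * W * G'ᵀ * Sᵀ = S * G * W * Gᵀ * Sᵀ + S * D * W * Dᵀ * Sᵀ := by
    have := congrArg (fun X => S * X * Sᵀ) key
    simpa only [Matrix.mul_add, Matrix.add_mul, Matrix.mul_assoc] using this
  rw [e, Matrix.trace_add]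
  linarith
end

section
/- (Corollary D.3, covariance identity for the structural approach.) The error covariance of the structural coherent combined forecast satisfies S * G * W * Gᵀ * Sᵀ = S * (Sᵀ * (Kᵀ * W⁻¹ * K) * S)⁻¹ * Sᵀ. -/
open Matrix

/-- Corollary D.3: covariance identity for the structural approach,
S G W Gᵀ Sᵀ = S (Sᵀ (Kᵀ W⁻¹ K) S)⁻¹ Sᵀ. -/
theorem structural_covariance {m n b : ℕ}
    (W : Matrix (Fin m) (Fin m) ℝ) (hW : W.PosDef)
    (K : Matrix (Fin m) (Fin n) ℝ) (hK : (Kᵀ * W⁻¹ * K).PosDef)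
    (S : Matrix (Fin n) (Fin b) ℝ)
    (hS : (Sᵀ * (Kᵀ * W⁻¹ * K) * S).PosDef) :
    let G : Matrix (Fin b) (Fin m) ℝ :=
      (Sᵀ * (Kᵀ * W⁻¹ * K) * S)⁻¹ * Sᵀ * Kᵀ * W⁻¹
    S * G * W * Gᵀ * Sᵀ = S * (Sᵀ * (Kᵀ * W⁻¹ * K) * S)⁻¹ * Sᵀ := by
  intro G
  have hWu : IsUnit W.det := (Matrix.isUnit_iff_isUnit_det W).mp hW.isUnit
  have hWt : Wᵀ = W := by
    have h := hW.isHermitian.eq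
    rwa [Matrix.conjTranspose_eq_transpose_of_trivial] at h
  have hAu := (Matrix.isUnit_iff_isUnit_det _).mp hS.isUnit
  have hAt := hS.isHermitian.eq
  rw [Matrix.conjTranspose_eq_transpose_of_trivial] at hAt
  obtain ⟨A, hA⟩ : ∃ A, A = Sᵀ * (Kᵀ * W⁻¹ * K) * S := ⟨_, rfl⟩
  have hG : G = A⁻¹ * Sᵀ * Kᵀ * W⁻¹ := by rw [hA]
  rw [← hA] at hAu hAt ⊢
  have hGt : Gᵀ = W⁻¹ * K * S * A⁻¹ := by
    rw [hG]
    simp only [Matrix.transpose_mul, Matrix.transpose_nonsing_inv, Matrix.transpose_transpose,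
      hWt, hAt, Matrix.mul_assoc]
  have key : G * W * Gᵀ = A⁻¹ := by
    have h1 : G * W = A⁻¹ * Sᵀ * Kᵀ := by
      rw [hG, Matrix.nonsing_inv_mul_cancel_right _ _ hWu]
    have h2 : A⁻¹ * Sᵀ * Kᵀ * (W⁻¹ * K * S * A⁻¹)
        = A⁻¹ * (Sᵀ * (Kᵀ * W⁻¹ * K) * S) * A⁻¹ := by
      simp only [Matrix.mul_assoc]
    rw [h1, hGt, h2, ← hA, Matrix.nonsing_inv_mul _ hAu, Matrix.one_mul]
  rw [Matrix.mul_assoc S G W, Matrix.mul_assoc S (G * W), key]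
end

section
/- (Corollary D.3, eq. (D.9): Schwarz inequality for the structural covariance.) Let q : ℕ, E : Matrix (Fin m) (Fin q) ℝ and L : Matrix (Fin q) (Fin n) ℝ satisfy Kᵀ * E = Lᵀ. Then Eᵀ * W * E - L * S * (Sᵀ * (Kᵀ * W⁻¹ * K) * S)⁻¹ * Sᵀ * Lᵀ is positive semidefinite; i.e., with W̃_c := S * (Sᵀ * (Kᵀ * W⁻¹ * K) * S)⁻¹ * Sᵀ, one has L * W̃_c * Lᵀ ⪯ Eᵀ * W * E. -/
open Matrix

/-- Corollary D.3, eq. (D.9): Schwarz inequality for the structural covariance: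
if Kᵀ E = Lᵀ then L W̃_c Lᵀ ⪯ Eᵀ W E with W̃_c = S (Sᵀ (Kᵀ W⁻¹ K) S)⁻¹ Sᵀ. -/
theorem structural_schwarz {m n b q : ℕ}
    (W : Matrix (Fin m) (Fin m) ℝ) (hW : W.PosDef)
    (K : Matrix (Fin m) (Fin n) ℝ) (hK : (Kᵀ * W⁻¹ * K).PosDef)
    (S : Matrix (Fin n) (Fin b) ℝ)
    (hS : (Sᵀ * (Kᵀ * W⁻¹ * K) * S).PosDef)
    (E : Matrix (Fin m) (Fin q) ℝ) (L : Matrix (Fin q) (Fin n) ℝ)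
    (hEL : Kᵀ * E = Lᵀ) :
    (Eᵀ * W * E -
      L * S * (Sᵀ * (Kᵀ * W⁻¹ * K) * S)⁻¹ * Sᵀ * Lᵀ).PosSemidef := by
  have hWT : Wᵀ = W := by simpa using hW.isHermitian.eq
  have hWd : IsUnit W.det := (Matrix.isUnit_iff_isUnit_det _).1 hW.isUnit
  have hG : Sᵀ * (Kᵀ * W⁻¹ * K) * S = (K * S)ᵀ * W⁻¹ * (K * S) := by
    simp only [Matrix.transpose_mul, Matrix.mul_assoc]
  have hR : Sᵀ * Lᵀ = (K * S)ᵀ * E := by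
    rw [← hEL, Matrix.transpose_mul, Matrix.mul_assoc]
  have hR' : L * S = Eᵀ * (K * S) := by
    have := congrArg Matrix.transpose hR
    simpa only [Matrix.transpose_mul, Matrix.transpose_transpose, Matrix.mul_assoc] using this
  rw [hG] at hS ⊢
  rw [Matrix.mul_assoc _ Sᵀ Lᵀ, hR, hR']
  generalize K * S = X at *
  have hGT : (Xᵀ * W⁻¹ * X)ᵀ = Xᵀ * W⁻¹ * X := by simpa using hS.isHermitian.eq
  have hGd : IsUnit (Xᵀ * W⁻¹ * X).det := (Matrix.isUnit_iff_isUnit_det _).1 hS.isUnit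
  have hGe : Xᵀ * (W⁻¹ * X) = Xᵀ * W⁻¹ * X := (Matrix.mul_assoc _ _ _).symm
  generalize Xᵀ * W⁻¹ * X = G at *
  have hGiT : (G⁻¹)ᵀ = G⁻¹ := by rw [Matrix.transpose_nonsing_inv, hGT]
  have hWiT : (W⁻¹)ᵀ = W⁻¹ := by rw [Matrix.transpose_nonsing_inv, hWT]
  have key := hW.posSemidef.conjTranspose_mul_mul_same (E - W⁻¹ * (X * (G⁻¹ * (Xᵀ * E))))
  convert key using 1
  have h3 : Xᵀ * (W⁻¹ * (X * (G⁻¹ * (Xᵀ * E)))) = Xᵀ * E := by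
    rw [← Matrix.mul_assoc W⁻¹, ← Matrix.mul_assoc Xᵀ, hGe, Matrix.mul_nonsing_inv_cancel_left _ _ hGd]
  have h4 (Z : Matrix (Fin m) (Fin q) ℝ) : W * (W⁻¹ * Z) = Z :=
    Matrix.mul_nonsing_inv_cancel_left _ _ hWd
  have h5 (Z : Matrix (Fin m) (Fin q) ℝ) : W⁻¹ * (W * Z) = Z :=
    Matrix.nonsing_inv_mul_cancel_left _ _ hWd
  simp only [Matrix.conjTranspose_eq_transpose_of_trivial, Matrix.transpose_sub,
    Matrix.transpose_mul, Matrix.transpose_transpose, hGiT, hWiT, Matrix.sub_mul, Matrix.mul_sub,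
    Matrix.mul_assoc, h3, h4, h5]
  abel
end

section
/- (Equivalence of the zero-constrained and structural approaches, Appendix D.) Assume in addition that C * S = 0, that C has rank u (Matrix.rank C = u), that S has rank b (Matrix.rank S = b), and that u + b = n. Then M * W_c = S * (Sᵀ * (Kᵀ * W⁻¹ * K) * S)⁻¹ * Sᵀ, and consequently M * Ωᵀ = S * G, so the zero-constrained coherent combined forecast M * Ωᵀ * ŷ coincides with the structural one S * G * ŷ for every ŷ. -/
open Matrix

lemma occ_aux {n u b : ℕ} (X₁ : Matrix (Fin n) (Fin u) ℝ) (X₂ : Matrix (Fin n) (Fin b) ℝ)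
    (Y₁ : Matrix (Fin u) (Fin n) ℝ) (Y₂ : Matrix (Fin b) (Fin n) ℝ) (hub : u + b = n)
    (h11 : Y₁ * X₁ = 1) (h12 : Y₁ * X₂ = 0) (h21 : Y₂ * X₁ = 0) (h22 : Y₂ * X₂ = 1) :
    X₁ * Y₁ + X₂ * Y₂ = 1 := by
  have e : Fin u ⊕ Fin b ≃ Fin n := finSumFinEquiv.trans (finCongr hub)
  have h : fromRows Y₁ Y₂ * fromCols X₁ X₂ = 1 := by
    rw [fromRows_mul_fromCols, h11, h12, h21, h22, fromBlocks_one]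
  rw [← fromCols_mul_fromRows]
  exact (mul_eq_one_comm_of_equiv e).1 h

/-- Appendix D: equivalence of the zero-constrained and structural approaches. -/
theorem occ_structural_equivalence {m n u b : ℕ}
    (W : Matrix (Fin m) (Fin m) ℝ) (hW : W.PosDef)
    (K : Matrix (Fin m) (Fin n) ℝ) (hK : (Kᵀ * W⁻¹ * K).PosDef)
    (C : Matrix (Fin u) (Fin n) ℝ)
    (hC : (C * (Kᵀ * W⁻¹ * K)⁻¹ * Cᵀ).PosDef)
    (S : Matrix (Fin n) (Fin b) ℝ)
    (hS : (Sᵀ * (Kᵀ * W⁻¹ * K) * S).PosDef)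
    (hCS : C * S = 0) (hrkC : C.rank = u) (hrkS : S.rank = b)
    (hub : u + b = n) :
    let W_c : Matrix (Fin n) (Fin n) ℝ := (Kᵀ * W⁻¹ * K)⁻¹
    let Ω : Matrix (Fin m) (Fin n) ℝ := W⁻¹ * K * W_c
    let M : Matrix (Fin n) (Fin n) ℝ := 1 - W_c * Cᵀ * (C * W_c * Cᵀ)⁻¹ * C
    let G : Matrix (Fin b) (Fin m) ℝ :=
      (Sᵀ * (Kᵀ * W⁻¹ * K) * S)⁻¹ * Sᵀ * Kᵀ * W⁻¹
    M * W_c = S * (Sᵀ * (Kᵀ * W⁻¹ * K) * S)⁻¹ * Sᵀ ∧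
      M * Ωᵀ = S * G ∧
      ∀ yhat : Fin m → ℝ, (M * Ωᵀ).mulVec yhat = (S * G).mulVec yhat := by
  intro W_c Ω M G
  have hWT : W⁻¹ᵀ = W⁻¹ := by
    have := hW.inv.isHermitian.eq
    rwa [conjTranspose_eq_transpose_of_trivial] at this
  have hWcT : W_cᵀ = W_c := by
    have := hK.inv.isHermitian.eq
    rwa [conjTranspose_eq_transpose_of_trivial] at this
  have hA : (Kᵀ * W⁻¹ * K) * W_c = 1 := mul_nonsing_inv _ ((isUnit_iff_isUnit_det _).1 hK.isUnit)
  have hD : (C * W_c * Cᵀ) * (C * W_c * Cᵀ)⁻¹ = 1 :=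
    mul_nonsing_inv _ ((isUnit_iff_isUnit_det _).1 hC.isUnit)
  have hE := nonsing_inv_mul _ ((isUnit_iff_isUnit_det _).1 hS.isUnit)
  have hSC : Sᵀ * Cᵀ = 0 := by rw [← transpose_mul, hCS, transpose_zero]
  have key := occ_aux (W_c * Cᵀ * (C * W_c * Cᵀ)⁻¹) S C
    ((Sᵀ * (Kᵀ * W⁻¹ * K) * S)⁻¹ * (Sᵀ * (Kᵀ * W⁻¹ * K))) hub
    (by rw [← hD]; simp only [Matrix.mul_assoc]) hCS
    (by
      calc _ = (Sᵀ * (Kᵀ * W⁻¹ * K) * S)⁻¹ * (Sᵀ * ((Kᵀ * W⁻¹ * K) * W_c) * Cᵀ)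
            * (C * W_c * Cᵀ)⁻¹ := by simp only [Matrix.mul_assoc]
        _ = 0 := by rw [hA, Matrix.mul_one, hSC, Matrix.mul_zero, Matrix.zero_mul])
    (by rw [Matrix.mul_assoc, hE])
  have hM : M = S * ((Sᵀ * (Kᵀ * W⁻¹ * K) * S)⁻¹ * (Sᵀ * (Kᵀ * W⁻¹ * K))) :=
    sub_eq_of_eq_add' key.symm
  have h1 : M * W_c = S * (Sᵀ * (Kᵀ * W⁻¹ * K) * S)⁻¹ * Sᵀ := by
    calc _ = S * (Sᵀ * (Kᵀ * W⁻¹ * K) * S)⁻¹ * Sᵀ * ((Kᵀ * W⁻¹ * K) * W_c) := by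
          rw [hM]; simp only [Matrix.mul_assoc]
      _ = _ := by rw [hA, Matrix.mul_one]
  have h2 : M * Ωᵀ = S * G := by
    have hΩ : Ωᵀ = W_c * (Kᵀ * W⁻¹) := by
      change (W⁻¹ * K * W_c)ᵀ = _
      rw [transpose_mul, transpose_mul, hWcT, hWT]
    rw [hΩ, ← Matrix.mul_assoc, h1]
    simp only [G, Matrix.mul_assoc]
  exact ⟨h1, h2, fun y => by rw [h2]⟩
end

section
/- (Equivalence of by-expert and by-variable organizations, Appendix D.2.) Let σ : Equiv.Perm (Fin m) and let P : Matrix (Fin m) (Fin m) ℝ be its permutation matrix (so P * Pᵀ = 1). Define Σ := P * W * Pᵀ, J := P * K, Σ_c := (Jᵀ * Σ⁻¹ * J)⁻¹, Γ := Σ⁻¹ * J * Σ_c, and M' := 1 - Σ_c * Cᵀ * (C * Σ_c * Cᵀ)⁻¹ * C. Then Σ_c = W_c, M' = M, Γ = P * Ω, and M' * Γᵀ * P = M * Ωᵀ; in particular, for every base-forecast vector ŷ : Fin m → ℝ, the by-variable coherent combined forecast (M' * Γᵀ).mulVec (P.mulVec ŷ) equals the by-expert one (M * Ωᵀ).mulVec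 ŷ. -/
open Matrix

/-- Appendix D.2: equivalence of by-expert and by-variable organizations of
the base forecasts, via a permutation matrix P. Here `Sig` plays the role of Σ
and `Sigc` of Σ_c. -/
theorem occ_by_variable_equivalence {m n u : ℕ}
    (W : Matrix (Fin m) (Fin m) ℝ) (hW : W.PosDef)
    (K : Matrix (Fin m) (Fin n) ℝ) (hK : (Kᵀ * W⁻¹ * K).PosDef)
    (C : Matrix (Fin u) (Fin n) ℝ)
    (hC : (C * (Kᵀ * W⁻¹ * K)⁻¹ * Cᵀ).PosDef)
    (σ : Equiv.Perm (Fin m)) :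
    let P : Matrix (Fin m) (Fin m) ℝ := σ.permMatrix ℝ
    let W_c : Matrix (Fin n) (Fin n) ℝ := (Kᵀ * W⁻¹ * K)⁻¹
    let Ω : Matrix (Fin m) (Fin n) ℝ := W⁻¹ * K * W_c
    let M : Matrix (Fin n) (Fin n) ℝ := 1 - W_c * Cᵀ * (C * W_c * Cᵀ)⁻¹ * C
    let Sig : Matrix (Fin m) (Fin m) ℝ := P * W * Pᵀ
    let J : Matrix (Fin m) (Fin n) ℝ := P * K
    let Sigc : Matrix (Fin n) (Fin n) ℝ := (Jᵀ * Sig⁻¹ * J)⁻¹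
    let Γ : Matrix (Fin m) (Fin n) ℝ := Sig⁻¹ * J * Sigc
    let M' : Matrix (Fin n) (Fin n) ℝ := 1 - Sigc * Cᵀ * (C * Sigc * Cᵀ)⁻¹ * C
    P * Pᵀ = 1 ∧
      Sigc = W_c ∧
      M' = M ∧
      Γ = P * Ω ∧
      M' * Γᵀ * P = M * Ωᵀ ∧
      ∀ yhat : Fin m → ℝ,
        (M' * Γᵀ).mulVec (P.mulVec yhat) = (M * Ωᵀ).mulVec yhat := by
  intro P W_c Ω M Sig J Sigc Γ M'
  have hP : P * Pᵀ = 1 := by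
    simp only [P]
    rw [Matrix.transpose_permMatrix, ← Matrix.permMatrix_mul]
    simp
  have hP' : Pᵀ * P = 1 := mul_eq_one_comm.mp hP
  have hi : P⁻¹ = Pᵀ := Matrix.inv_eq_right_inv hP
  have hi' : Pᵀ⁻¹ = P := Matrix.inv_eq_right_inv hP'
  have hS : Sig⁻¹ = P * W⁻¹ * Pᵀ := by
    simp only [Sig]
    rw [Matrix.mul_inv_rev, Matrix.mul_inv_rev, hi, hi', Matrix.mul_assoc]
  have hSJ : Sig⁻¹ * J = P * (W⁻¹ * K) := by
    rw [hS]
    calc P * W⁻¹ * Pᵀ * (P * K) = P * W⁻¹ * ((Pᵀ * P) * K) := by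
          simp only [Matrix.mul_assoc]
      _ = _ := by rw [hP', Matrix.one_mul, Matrix.mul_assoc]
  have hc : Sigc = W_c := by
    have h : Jᵀ * Sig⁻¹ * J = Kᵀ * W⁻¹ * K := by
      rw [Matrix.mul_assoc, hSJ]
      calc (P * K)ᵀ * (P * (W⁻¹ * K)) = Kᵀ * ((Pᵀ * P) * (W⁻¹ * K)) := by
            simp only [Matrix.transpose_mul, Matrix.mul_assoc]
        _ = _ := by rw [hP', Matrix.one_mul, Matrix.mul_assoc]
    simp only [Sigc, W_c, h]
  have hM : M' = M := by simp only [M', M, hc]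
  have hG : Γ = P * Ω := by
    change Sig⁻¹ * J * Sigc = P * (W⁻¹ * K * W_c)
    rw [hSJ, hc, Matrix.mul_assoc]
  have hF : M' * Γᵀ * P = M * Ωᵀ := by
    rw [hM, hG, Matrix.transpose_mul, Matrix.mul_assoc, Matrix.mul_assoc, hP', Matrix.mul_one]
  refine ⟨hP, hc, hM, hG, hF, fun y => ?_⟩
  rw [Matrix.mulVec_mulVec, hF]
end

section
/- (First-order (KKT) conditions, eq. (A.1).) For every base-forecast vector ŷ : Fin m → ℝ, set ỹ := (M * Ωᵀ).mulVec ŷ and λ̃ := ((C * W_c * Cᵀ)⁻¹ * C * W_c * Kᵀ * W⁻¹).mulVec ŷ. Then the pair (ỹ, λ̃) solves the stationarity system of the constrained quadratic program: (Kᵀ * W⁻¹ * K).mulVec ỹ + Cᵀ.mulVec λ̃ = (Kᵀ * W⁻¹).mulVec ŷ and C.mulVec ỹ = 0. -/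
open Matrix

/-- Eq. (A.1): the pair (ỹ, λ̃) solves the first-order (KKT) stationarity system
of the constrained quadratic program. `lam` plays the role of λ̃. -/
theorem occ_kkt {m n u : ℕ}
    (W : Matrix (Fin m) (Fin m) ℝ) (hW : W.PosDef)
    (K : Matrix (Fin m) (Fin n) ℝ) (hK : (Kᵀ * W⁻¹ * K).PosDef)
    (C : Matrix (Fin u) (Fin n) ℝ)
    (hC : (C * (Kᵀ * W⁻¹ * K)⁻¹ * Cᵀ).PosDef)
    (yhat : Fin m → ℝ) :
    let W_c : Matrix (Fin n) (Fin n) ℝ := (Kᵀ * W⁻¹ * K)⁻¹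
    let Ω : Matrix (Fin m) (Fin n) ℝ := W⁻¹ * K * W_c
    let M : Matrix (Fin n) (Fin n) ℝ := 1 - W_c * Cᵀ * (C * W_c * Cᵀ)⁻¹ * C
    let ytilde : Fin n → ℝ := (M * Ωᵀ).mulVec yhat
    let lam : Fin u → ℝ :=
      ((C * W_c * Cᵀ)⁻¹ * C * W_c * Kᵀ * W⁻¹).mulVec yhat
    (Kᵀ * W⁻¹ * K).mulVec ytilde + Cᵀ.mulVec lam = (Kᵀ * W⁻¹).mulVec yhat ∧
      C.mulVec ytilde = 0 := by
  intro W_c Ω M ytilde lam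
  have hWt : Wᵀ = W := by
    have h := hW.isHermitian.eq
    rwa [conjTranspose_eq_transpose_of_trivial] at h
  have hAt : (Kᵀ * W⁻¹ * K)ᵀ = Kᵀ * W⁻¹ * K := by
    have h := hK.isHermitian.eq
    rwa [conjTranspose_eq_transpose_of_trivial] at h
  have hA : (Kᵀ * W⁻¹ * K) * W_c = 1 :=
    Matrix.mul_nonsing_inv _ ((Matrix.isUnit_iff_isUnit_det _).1 hK.isUnit)
  have hS : (C * W_c * Cᵀ) * (C * W_c * Cᵀ)⁻¹ = 1 :=
    Matrix.mul_nonsing_inv _ ((Matrix.isUnit_iff_isUnit_det _).1 hC.isUnit)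
  have hΩ : Ωᵀ = W_c * (Kᵀ * W⁻¹) := by
    have h1 : W_cᵀ = W_c := by
      change ((Kᵀ * W⁻¹ * K)⁻¹)ᵀ = (Kᵀ * W⁻¹ * K)⁻¹
      rw [Matrix.transpose_nonsing_inv, hAt]
    change (W⁻¹ * K * W_c)ᵀ = _
    rw [Matrix.transpose_mul, Matrix.transpose_mul, h1, Matrix.transpose_nonsing_inv, hWt]
  have hAM : (Kᵀ * W⁻¹ * K) * M = (Kᵀ * W⁻¹ * K) - Cᵀ * (C * W_c * Cᵀ)⁻¹ * C := by
    change (Kᵀ * W⁻¹ * K) * (1 - W_c * Cᵀ * (C * W_c * Cᵀ)⁻¹ * C) = _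
    rw [Matrix.mul_sub, Matrix.mul_one]
    congr 1
    calc _ = ((Kᵀ * W⁻¹ * K) * W_c) * (Cᵀ * (C * W_c * Cᵀ)⁻¹ * C) := by
          simp only [Matrix.mul_assoc]
      _ = _ := by rw [hA, Matrix.one_mul]
  have hCM : C * M = 0 := by
    change C * (1 - W_c * Cᵀ * (C * W_c * Cᵀ)⁻¹ * C) = 0
    rw [Matrix.mul_sub, Matrix.mul_one, sub_eq_zero]
    calc C = ((C * W_c * Cᵀ) * (C * W_c * Cᵀ)⁻¹) * C := by rw [hS, Matrix.one_mul]
      _ = _ := by simp only [Matrix.mul_assoc]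
  constructor
  · change (Kᵀ * W⁻¹ * K).mulVec ((M * Ωᵀ).mulVec yhat) + Cᵀ.mulVec
      (((C * W_c * Cᵀ)⁻¹ * C * W_c * Kᵀ * W⁻¹).mulVec yhat) = _
    rw [Matrix.mulVec_mulVec, Matrix.mulVec_mulVec, ← Matrix.add_mulVec,
      ← Matrix.mul_assoc, hAM, hΩ, Matrix.sub_mul, ← Matrix.mul_assoc (Kᵀ * W⁻¹ * K) W_c,
      hA, Matrix.one_mul]
    congr 1
    generalize (C * W_c * Cᵀ)⁻¹ = T
    simp only [Matrix.mul_assoc, sub_add_cancel]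
  · change C.mulVec ((M * Ωᵀ).mulVec yhat) = 0
    rw [Matrix.mulVec_mulVec, ← Matrix.mul_assoc, hCM, Matrix.zero_mul, Matrix.zero_mulVec]
end

section
/- (Error representation of the coherent combined forecast.) For every base-forecast vector ŷ : Fin m → ℝ and every coherent target y : Fin n → ℝ with C.mulVec y = 0, the coherent combination error satisfies (M * Ωᵀ).mulVec ŷ - y = (M * Ωᵀ).mulVec (ŷ - K.mulVec y); that is, the error of ỹ := (M * Ωᵀ).mulVec ŷ is the linear image under M * Ωᵀ of the base-forecast error ŷ - K.mulVec y. -/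
open Matrix

/-- Error representation of the coherent combined forecast:
(M Ωᵀ) ŷ - y = (M Ωᵀ) (ŷ - K y) for any coherent target y. -/
theorem occ_error_representation {m n u : ℕ}
    (W : Matrix (Fin m) (Fin m) ℝ) (hW : W.PosDef)
    (K : Matrix (Fin m) (Fin n) ℝ) (hK : (Kᵀ * W⁻¹ * K).PosDef)
    (C : Matrix (Fin u) (Fin n) ℝ)
    (hC : (C * (Kᵀ * W⁻¹ * K)⁻¹ * Cᵀ).PosDef)
    (yhat : Fin m → ℝ) (y : Fin n → ℝ) (hy : C.mulVec y = 0) :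
    let W_c : Matrix (Fin n) (Fin n) ℝ := (Kᵀ * W⁻¹ * K)⁻¹
    let Ω : Matrix (Fin m) (Fin n) ℝ := W⁻¹ * K * W_c
    let M : Matrix (Fin n) (Fin n) ℝ := 1 - W_c * Cᵀ * (C * W_c * Cᵀ)⁻¹ * C
    (M * Ωᵀ).mulVec yhat - y = (M * Ωᵀ).mulVec (yhat - K.mulVec y) := by
  intro W_c Ω M
  have hWt : Wᵀ = W := by
    have h := hW.isHermitian.eq
    rwa [conjTranspose_eq_transpose_of_trivial] at h
  have hAt : (Kᵀ * W⁻¹ * K)ᵀ = Kᵀ * W⁻¹ * K := by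
    have h := hK.isHermitian.eq
    rwa [conjTranspose_eq_transpose_of_trivial] at h
  have hdet : IsUnit (Kᵀ * W⁻¹ * K).det := (Matrix.isUnit_iff_isUnit_det _).1 hK.isUnit
  have hΩ : Ωᵀ * K = 1 := by
    have h1 : Ωᵀ = W_c * (Kᵀ * W⁻¹) := by
      simp only [Ω, W_c, transpose_mul, transpose_nonsing_inv, hWt, transpose_transpose,
        Matrix.mul_assoc]
    rw [h1, Matrix.mul_assoc]
    exact Matrix.nonsing_inv_mul _ hdet
  have hM : M.mulVec y = y := by
    simp only [M, sub_mulVec, one_mulVec, ← mulVec_mulVec, hy, mulVec_zero, sub_zero]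
  rw [mulVec_sub, mulVec_mulVec, Matrix.mul_assoc, hΩ, Matrix.mul_one, hM]
end
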